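/- (Identifiability) Let m ≥ 1 and consider the complete OR mixture model on m monitors with parameters p_S ∈ [0,1) for every nonempty subset S of {1,…,m}. The joint distribution of the observation vector x determines the parameters uniquely: if p = (p_S) and p′ = (p′_S) are two parameter vectors with all entries in [0,1) such that the induced joint distributions of x on {0,1}^m coincide, then p_S = p′_S for every nonempty S ⊆ {1,…,m}. -/

import Mathlib

/-- Boolean OR mixture: `x i = ⋁_j (g i j ∧ y j)`. -/
def orMix {ι κ : Type*} [Fintype κ] (G : ι → κ → Bool) (y : κ → Bool) (i : ι) : Bool :=
  decide (∃ j, G i j = true ∧ y j = true)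

/-- Weight of a configuration `y` under independent Bernoulli sources with
parameters `p`. -/
noncomputable def bweight {κ : Type*} [Fintype κ] (p : κ → ℝ) (y : κ → Bool) : ℝ :=
  ∏ j, if y j then p j else 1 - p j

open Classical in
/-- Probability of an event `E` under independent Bernoulli sources with
parameters `p`. -/
noncomputable def bprob {κ : Type*} [Fintype κ] [DecidableEq κ] (p : κ → ℝ)
    (E : (κ → Bool) → Prop) : ℝ :=
  ∑ y : κ → Bool, if E y then bweight p y else 0

/-!
The event that all monitors outside `A` are silent occurs exactly when every source whose support
is not contained in `A` is inactive, so by independence its probability is the product of `1 - p j`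
over these sources. Dividing the same quantity for `A = ∅` by it leaves the product of `1 - p j`
over the sources supported in `A`. The distribution of the observations thus determines all the
latter products, and the factors `1 - p j` are recovered from them by induction on the support
of `j`.
-/

/-- The support of the source `j`: the set of monitors to which the incidence matrix `G` of an
OR mixture connects `j`. -/
def sourceSupport {ι κ : Type*} (G : ι → κ → Bool) (j : κ) : Set ι :=
  {i | G i j = true}

theorem eq_of_prod_filter_le_eq {κ α M₀ : Type*} [Fintype κ] [PartialOrder α] [DecidableLE α]
    [CommMonoidWithZero M₀] [IsCancelMulZero M₀]
    {f : κ → α} (hf : Function.Injective f) {u v : κ → M₀} (hv : ∀ j, v j ≠ 0)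
    (h : ∀ j, ∏ k with f k ≤ f j, u k = ∏ k with f k ≤ f j, v k) :
    u = v := by
  classical
  have wf : WellFounded fun k j => f k < f j :=
    have : IsTrans κ fun k j => f k < f j := ⟨fun _ _ _ => lt_trans⟩
    have : Std.Irrefl fun k j => f k < f j := ⟨fun _ => lt_irrefl _⟩
    Finite.wellFounded_of_trans_of_irrefl _
  funext j
  induction j using wf.induction with
  | _ j ih =>
    have : Nontrivial M₀ := ⟨v j, 0, hv j⟩
    have hj : j ∈ ({k | f k ≤ f j} : Finset κ) := by simp
    have h_erase : ∏ k ∈ ({k | f k ≤ f j} : Finset κ).erase j, u k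
        = ∏ k ∈ ({k | f k ≤ f j} : Finset κ).erase j, v k := by
      refine Finset.prod_congr rfl fun k hk => ih k ?_
      obtain ⟨hkj, hk⟩ := Finset.mem_erase.mp hk
      exact (Finset.mem_filter.mp hk).2.lt_of_ne (hf.ne hkj)
    have h_mul := h j
    rw [← Finset.mul_prod_erase _ u hj, ← Finset.mul_prod_erase _ v hj, h_erase] at h_mul
    exact mul_right_cancel₀ (Finset.prod_ne_zero_iff.mpr fun k _ => hv k) h_mul

section Bernoulli

variable {κ : Type*} [Fintype κ] [DecidableEq κ]

theorem bprob_eq_sum_filter (p : κ → ℝ) (E : (κ → Bool) → Prop) [DecidablePred E] :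
    bprob p E = ∑ y with E y, bweight p y := by
  rw [bprob, Finset.sum_filter]
  congr!

theorem bprob_forall_mem (p : κ → ℝ) (t : κ → Finset Bool) :
    bprob p (fun y => ∀ j, y j ∈ t j) = ∏ j, ∑ b ∈ t j, if b then p j else 1 - p j := by
  rw [bprob_eq_sum_filter, Finset.prod_univ_sum]
  refine Finset.sum_congr ?_ fun y _ => rfl
  ext y
  simp

theorem bprob_forall_mem_eq_false (p : κ → ℝ) (s : Finset κ) :
    bprob p (fun y => ∀ j ∈ s, y j = false) = ∏ j ∈ s, (1 - p j) := by
  have h_event : (fun y : κ → Bool => ∀ j ∈ s, y j = false)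
      = fun y => ∀ j, y j ∈ if j ∈ s then {false} else Finset.univ := by
    ext y
    refine forall_congr' fun j => ?_
    split_ifs with hj <;> simp [hj]
  rw [h_event, bprob_forall_mem, ← Finset.prod_subset s.subset_univ]
  · exact Finset.prod_congr rfl fun j hj => by simp [hj]
  · intro j _ hj
    simp [hj]

open Classical in
theorem bprob_comp_eq_sum {α : Type*} (p : κ → ℝ) (X : (κ → Bool) → α) (P : α → Prop) :
    bprob p (fun y => P (X y))
      = ∑ a ∈ Finset.univ.image X with P a, bprob p (fun y => X y = a) := by
  simp only [bprob_eq_sum_filter]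
  rw [← Finset.sum_fiberwise_of_maps_to (g := X) (t := {a ∈ Finset.univ.image X | P a})
    (by simp)]
  refine Finset.sum_congr rfl fun a ha => ?_
  rw [Finset.filter_filter]
  refine Finset.sum_congr (Finset.filter_congr fun y _ => ?_) fun _ _ => rfl
  exact and_iff_right_of_imp fun hy => hy ▸ (Finset.mem_filter.mp ha).2

theorem bprob_comp_congr {α : Type*} {p p' : κ → ℝ} {X : (κ → Bool) → α}
    (h : ∀ a, bprob p (fun y => X y = a) = bprob p' (fun y => X y = a)) (P : α → Prop) :
    bprob p (fun y => P (X y)) = bprob p' (fun y => P (X y)) := by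
  simp only [bprob_comp_eq_sum, h]

end Bernoulli

section OrMixture

variable {ι κ : Type*}

theorem sourceSupport_decide_mem [DecidableEq ι] (f : κ → Finset ι) :
    sourceSupport (fun i j => decide (i ∈ f j)) = fun j => (f j : Set ι) := by
  ext j i
  simp [sourceSupport]

variable [Fintype κ]

theorem orMix_eq_false_iff {G : ι → κ → Bool} {y : κ → Bool} {i : ι} :
    orMix G y i = false ↔ ∀ j, i ∈ sourceSupport G j → y j = false := by
  simp [orMix, sourceSupport]

theorem forall_notMem_orMix_eq_false_iff {G : ι → κ → Bool} {y : κ → Bool} {A : Set ι} :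
    (∀ i ∉ A, orMix G y i = false) ↔ ∀ j, ¬ sourceSupport G j ⊆ A → y j = false := by
  simp only [orMix_eq_false_iff, Set.not_subset]
  grind

variable [DecidableEq κ]

open Classical in
theorem bprob_forall_notMem_orMix_eq_false (p : κ → ℝ) (G : ι → κ → Bool) (A : Set ι) :
    bprob p (fun y => ∀ i ∉ A, orMix G y i = false)
      = ∏ j with ¬ sourceSupport G j ⊆ A, (1 - p j) := by
  simp only [forall_notMem_orMix_eq_false_iff, ← bprob_forall_mem_eq_false, Finset.mem_filter_univ]

open Classical in
theorem prod_sourceSupport_subset_congr {G : ι → κ → Bool}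
    (hG : ∀ j, (sourceSupport G j).Nonempty) {p p' : κ → ℝ} (hp' : ∀ j, p' j ≠ 1)
    (hdist : ∀ v : ι → Bool, bprob p (fun y => ∀ i, orMix G y i = v i)
      = bprob p' (fun y => ∀ i, orMix G y i = v i)) (A : Set ι) :
    ∏ j with sourceSupport G j ⊆ A, (1 - p j) = ∏ j with sourceSupport G j ⊆ A, (1 - p' j) := by
  have h_not_subset (B : Set ι) : ∏ j with ¬ sourceSupport G j ⊆ B, (1 - p j)
      = ∏ j with ¬ sourceSupport G j ⊆ B, (1 - p' j) := by
    simp only [← bprob_forall_notMem_orMix_eq_false]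
    exact bprob_comp_congr (X := orMix G) (by simpa only [funext_iff] using hdist)
      fun v => ∀ i ∉ B, v i = false
  have h_univ : ∏ j, (1 - p j) = ∏ j, (1 - p' j) := by
    simpa [Set.subset_empty_iff, (hG _).ne_empty] using h_not_subset ∅
  rw [← Finset.prod_filter_mul_prod_filter_not _ (fun j => sourceSupport G j ⊆ A),
    ← Finset.prod_filter_mul_prod_filter_not _ (fun j => sourceSupport G j ⊆ A) fun j => 1 - p' j,
    h_not_subset A] at h_univ
  exact mul_right_cancel₀
    (Finset.prod_ne_zero_iff.mpr fun j _ => sub_ne_zero.mpr (hp' j).symm) h_univ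

theorem complete_or_mixture_identifiable_general {G : ι → κ → Bool}
    (hG_inj : Function.Injective (sourceSupport G)) (hG : ∀ j, (sourceSupport G j).Nonempty)
    {p p' : κ → ℝ} (hp' : ∀ j, p' j ≠ 1)
    (hdist : ∀ v : ι → Bool, bprob p (fun y => ∀ i, orMix G y i = v i)
      = bprob p' (fun y => ∀ i, orMix G y i = v i)) :
    p = p' := by
  classical
  have h_sub : (fun j => 1 - p j) = fun j => 1 - p' j :=
    eq_of_prod_filter_le_eq hG_inj (fun j => sub_ne_zero.mpr (hp' j).symm) fun j =>
      prod_sourceSupport_subset_congr hG hp' hdist (sourceSupport G j)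
  exact funext fun j => sub_right_injective (congrFun h_sub j)

end OrMixture

/-- (Identifiability) In the complete OR mixture model on `m ≥ 1` monitors with
all parameters in `[0,1)`, the joint distribution of the observation vector on
`{0,1}^m` determines the parameters uniquely. -/
theorem complete_or_mixture_identifiable (m : ℕ) (hm : 1 ≤ m)
    (p p' : {S : Finset (Fin m) // S.Nonempty} → ℝ)
    (hp : ∀ S, p S ∈ Set.Ico (0 : ℝ) 1) (hp' : ∀ S, p' S ∈ Set.Ico (0 : ℝ) 1)
    (hdist : ∀ v : Fin m → Bool,
      bprob p (fun y => ∀ i, orMix (fun (i : Fin m)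
          (S : {S : Finset (Fin m) // S.Nonempty}) => decide (i ∈ S.1)) y i = v i)
        = bprob p' (fun y => ∀ i, orMix (fun (i : Fin m)
            (S : {S : Finset (Fin m) // S.Nonempty}) => decide (i ∈ S.1)) y i = v i)) :
    p = p' :=
  complete_or_mixture_identifiable_general
    (by rw [sourceSupport_decide_mem]; exact Finset.coe_injective.comp Subtype.val_injective)
    (by simp [sourceSupport_decide_mem, Subtype.prop]) (fun S => (hp' S).2.ne) hdist
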